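/- arXiv:1205.0309 — 2 statements merged into one kernel-verified Lean document; each statement's English description precedes it below -/
import Mathlib

section
/- Let n, R, K be positive integers, let s > 0, let m be a positive integer, and let D ∈ ℝ^{n×R} be a matrix with exactly K distinct row values such that any two distinct row values of D are at Euclidean distance at least s and each distinct row value of D occurs as a row of D for more than m indices. Let C ∈ ℝ^{n×R} be any matrix with fewer than K distinct row values. Then ‖C − D‖_F > √m · (s/3). -/
open Matrix

/-- The Euclidean distance between two vectors in `ℝ^R` (e.g. two rows of a matrix). -/
noncomputable def rowDist {R : ℕ} (a b : Fin R → ℝ) : ℝ :=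
  Real.sqrt (∑ k, (a k - b k) ^ 2)

/-- The Frobenius norm of a real matrix. -/
noncomputable def frobNorm {m n : ℕ} (A : Matrix (Fin m) (Fin n) ℝ) : ℝ :=
  Real.sqrt (∑ i, ∑ j, (A i j) ^ 2)

/-!
Put `r = s / 3`. The balls of radius `r` around the `K` row values of `D` are pairwise disjoint, so
fewer than `K` row values of `C` miss at least one of them, around `v` say. The more than `m` rows
at which `D` takes the value `v` then contribute more than `r ^ 2` each to `‖C - D‖_F ^ 2`.
-/

section Separation

open Metric
open scoped NNReal

theorem encard_le_encard_of_isSeparated_of_isCover {α : Type*} [PseudoEMetricSpace α]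
    {r : ℝ≥0} {s t : Set α} (hs : IsSeparated (2 * r : ℝ≥0) s) (hst : IsCover r s t) :
    s.encard ≤ t.encard :=
  calc
    s.encard ≤ packingNumber (2 * r) s := hs.encard_le_packingNumber subset_rfl
    _ ≤ externalCoveringNumber r s := packingNumber_two_mul_le_externalCoveringNumber r s
    _ ≤ t.encard := hst.externalCoveringNumber_le_encard

theorem exists_forall_lt_edist_of_encard_range_lt {ι α : Type*} [PseudoEMetricSpace α]
    {r : ℝ≥0} {x y : ι → α} (hy : IsSeparated (2 * r : ℝ≥0) (Set.range y))
    (hcard : (Set.range x).encard < (Set.range y).encard) :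
    ∃ i, ∀ j, y j = y i → r < edist (x j) (y j) := by
  by_contra! hnear
  have hcover : IsCover r (Set.range y) (Set.range x) := by
    rintro _ ⟨i, rfl⟩
    obtain ⟨j, hji, hle⟩ := hnear i
    exact ⟨x j, ⟨j, rfl⟩, hji ▸ (edist_comm _ _).trans_le hle⟩
  exact hcard.not_ge (encard_le_encard_of_isSeparated_of_isCover hy hcover)

theorem exists_forall_lt_dist_of_ncard_range_lt {ι α : Type*} [Finite ι] [PseudoMetricSpace α]
    {r : ℝ} (hr : 0 ≤ r) {x y : ι → α} (hy : ∀ i j, y i ≠ y j → 2 * r < dist (y i) (y j))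
    (hcard : (Set.range x).ncard < (Set.range y).ncard) :
    ∃ i, ∀ j, y j = y i → r < dist (x j) (y j) := by
  lift r to ℝ≥0 using hr
  have hsep : IsSeparated (2 * r : ℝ≥0) (Set.range y) := by
    rintro _ ⟨i, rfl⟩ _ ⟨j, rfl⟩ hij
    rw [edist_nndist]
    exact_mod_cast hy i j hij
  have hencard : (Set.range x).encard < (Set.range y).encard := by
    rw [← (Set.finite_range x).cast_ncard_eq, ← (Set.finite_range y).cast_ncard_eq]
    exact_mod_cast hcard
  obtain ⟨i, hi⟩ := exists_forall_lt_edist_of_encard_range_lt hsep hencard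
  refine ⟨i, fun j hji => ?_⟩
  have hfar := hi j hji
  rw [edist_nndist] at hfar
  exact_mod_cast hfar

end Separation

theorem natCast_mul_lt_sum_of_lt_ncard {ι R : Type*} [Fintype ι] [Semiring R] [PartialOrder R]
    [IsStrictOrderedRing R] {f : ι → R} (hf : ∀ i, 0 ≤ f i) {c : R} (hc : 0 < c) {t : Set ι}
    (ht : ∀ i ∈ t, c ≤ f i) {m : ℕ} (hm : m < t.ncard) :
    m * c < ∑ i, f i := by
  classical
  rw [Set.ncard_eq_toFinset_card'] at hm
  calc
    m * c < t.toFinset.card * c := by gcongr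
    _ = t.toFinset.card • c := (nsmul_eq_mul _ _).symm
    _ ≤ ∑ i ∈ t.toFinset, f i :=
      Finset.card_nsmul_le_sum _ _ _ fun i hi => ht i (Set.mem_toFinset.mp hi)
    _ ≤ ∑ i, f i := Finset.sum_le_univ_sum_of_nonneg hf

theorem rowDist_eq_dist {R : ℕ} (a b : Fin R → ℝ) :
    rowDist a b = dist (WithLp.toLp 2 a) (WithLp.toLp 2 b) := by
  simp only [rowDist, EuclideanSpace.dist_eq, Real.dist_eq, sq_abs]

theorem frobNorm_sub_eq_sqrt_sum_dist_sq {n R : ℕ} (A B : Matrix (Fin n) (Fin R) ℝ) :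
    frobNorm (A - B) = √(∑ i, dist (WithLp.toLp 2 (A i)) (WithLp.toLp 2 (B i)) ^ 2) := by
  simp only [frobNorm, EuclideanSpace.dist_sq_eq, Real.dist_eq, sq_abs, Matrix.sub_apply]

theorem ncard_range_toLp_row {m n α : Type*} (p : ENNReal) (A : Matrix m n α) :
    (Set.range fun i => WithLp.toLp p (A i)).ncard = (Set.range fun i => A i).ncard := by
  rw [Set.range_comp' (WithLp.toLp p) fun i => A i,
    Set.ncard_image_of_injective _ (WithLp.toLp_injective p)]

theorem stmt12_general {ι α : Type*} [Fintype ι] [PseudoMetricSpace α] {m : ℕ} (p : ℕ)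
    {r : ℝ} (hr : 0 < r) {x y : ι → α}
    (hsep : ∀ i j, y i ≠ y j → 2 * r < dist (y i) (y j))
    (hocc : ∀ i, m < {j | y j = y i}.ncard)
    (hcard : (Set.range x).ncard < (Set.range y).ncard) :
    m * r ^ p < ∑ i, dist (x i) (y i) ^ p := by
  obtain ⟨i, hi⟩ := exists_forall_lt_dist_of_ncard_range_lt hr.le hsep hcard
  have hfar : ∀ j ∈ {j | y j = y i}, r ^ p ≤ dist (x j) (y j) ^ p := fun j hj =>
    pow_le_pow_left₀ hr.le (hi j hj).le p
  exact natCast_mul_lt_sum_of_lt_ncard (fun _ => by positivity) (pow_pos hr p) hfar (hocc i)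

/-- if `D` has exactly `K` distinct row values, pairwise `s`-separated, each
occurring more than `m` times, then any matrix `C` with fewer than `K` distinct row values
satisfies `‖C - D‖_F > √m (s/3)`. -/
theorem stmt12 {n R K m : ℕ} (hn : 0 < n) (hR : 0 < R) (hK : 0 < K) (hm : 0 < m)
    (s : ℝ) (hs : 0 < s)
    (D : Matrix (Fin n) (Fin R) ℝ)
    (hKrows : (Set.range fun i => D i).ncard = K)
    (hsep : ∀ i j, D i ≠ D j → s ≤ rowDist (D i) (D j))
    (hocc : ∀ i, m < {j | D j = D i}.ncard)
    (C : Matrix (Fin n) (Fin R) ℝ)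
    (hC : (Set.range fun i => C i).ncard < K) :
    Real.sqrt m * (s / 3) < frobNorm (C - D) := by
  have hsep' (i j) (hij : WithLp.toLp 2 (D i) ≠ WithLp.toLp 2 (D j)) :
      2 * (s / 3) < dist (WithLp.toLp 2 (D i)) (WithLp.toLp 2 (D j)) := by
    have hle := hsep i j fun h => hij (congrArg _ h)
    rw [rowDist_eq_dist] at hle
    linarith
  have hcard : (Set.range fun i => WithLp.toLp 2 (C i)).ncard <
      (Set.range fun i => WithLp.toLp 2 (D i)).ncard := by
    rwa [ncard_range_toLp_row, ncard_range_toLp_row, hKrows]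
  rw [frobNorm_sub_eq_sqrt_sum_dist_sq]
  apply Real.lt_sqrt_of_sq_lt
  rw [mul_pow, Real.sq_sqrt m.cast_nonneg]
  exact stmt12_general 2 (by positivity) hsep'
    (by simpa only [(WithLp.toLp_injective 2).eq_iff] using hocc) hcard
end

section
/- Let n, R, K be positive integers, let s, t > 0 and let m be a positive integer with √m·(s/3) > 2t. Let X, D ∈ ℝ^{n×R} be such that D has exactly K distinct row values, any two distinct row values of D are at Euclidean distance at least s, each distinct row value of D occurs as a row of D for more than m indices, and ‖D − X‖_F ≤ t. Then: (i) there exists a matrix C ∈ ℝ^{n×R} with at most K distinct row values such that ‖C − X‖_F ≤ t; and (ii) every matrix C ∈ ℝ^{n×R} with fewer than K distinct row values satisfies ‖C − X‖_F > t. -/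
open Matrix

/-!
Let `D` have `K` row values, pairwise `s` apart, and let `C` have fewer. If every value `v` of `D`
had an index `j` with `D j = v` and `C j` within `s / 2` of `v`, then by the triangle inequality
`C j` would determine `v`, and `C` would take at least `K` values. So some value of `D` is missed by
`s / 2` at each of its at least `m` indices, whence `√m * (s / 2) ≤ ‖D - C‖`. As the left-hand side
exceeds `2 * t` and `‖D - X‖ ≤ t`, the triangle inequality gives `t < ‖C - X‖`.
-/

open scoped ENNReal

section Clustering

open Set

variable {ι : Type*}

theorem ncard_range_le_of_factorsThrough {α β : Type*} [Finite ι] {f : ι → α} {g : ι → β}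
    (h : f.FactorsThrough g) : (range f).ncard ≤ (range g).ncard := by
  cases isEmpty_or_nonempty ι
  · simp [range_eq_empty]
  · have : Nonempty α := .map f inferInstance
    obtain ⟨e, rfl⟩ := (Function.factorsThrough_iff f).1 h
    rw [range_comp]
    exact ncard_image_le

theorem exists_forall_fiber_half_le_dist {E : Type*} [PseudoMetricSpace E] [Finite ι]
    {f g : ι → E} {s : ℝ} (hsep : ∀ i j, f i ≠ f j → s ≤ dist (f i) (f j))
    (hlt : (range g).ncard < (range f).ncard) :
    ∃ i, ∀ j, f j = f i → s / 2 ≤ dist (f j) (g j) := by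
  by_contra! hclose
  choose r hfr hdist using hclose
  have hfactor : f.FactorsThrough (g ∘ r) := by
    intro i j hij
    by_contra hne
    have hi : dist (f i) (g (r i)) < s / 2 := hfr i ▸ hdist i
    have hj : dist (f j) (g (r i)) < s / 2 := by
      simpa only [hfr, ← show g (r i) = g (r j) from hij] using hdist j
    linarith [hsep i j hne, dist_triangle_right (f i) (f j) (g (r i))]
  exact hlt.not_ge <| (ncard_range_le_of_factorsThrough hfactor).trans <|
    ncard_le_ncard (range_comp_subset_range r g)

variable [Fintype ι] {p : ℝ≥0∞}

theorem ncard_rpow_mul_le_piLp_dist {E : ι → Type*} [∀ i, PseudoMetricSpace (E i)]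
    (hp : 0 < p.toReal) {f g : PiLp p E} {S : Set ι} {r : ℝ} (hr : 0 ≤ r)
    (h : ∀ i ∈ S, r ≤ dist (f i) (g i)) :
    (S.ncard : ℝ) ^ (1 / p.toReal) * r ≤ dist f g := by
  classical
  have hsum : S.ncard * r ^ p.toReal ≤ ∑ i, dist (f i) (g i) ^ p.toReal := calc
    S.ncard * r ^ p.toReal = ∑ _i ∈ S.toFinset, r ^ p.toReal := by
      rw [Finset.sum_const, nsmul_eq_mul, ncard_eq_toFinset_card']
    _ ≤ ∑ i ∈ S.toFinset, dist (f i) (g i) ^ p.toReal :=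
      Finset.sum_le_sum fun i hi => by gcongr; exact h i (mem_toFinset.1 hi)
    _ ≤ ∑ i, dist (f i) (g i) ^ p.toReal :=
      Finset.sum_le_univ_sum_of_nonneg fun i => by positivity
  calc
    (S.ncard : ℝ) ^ (1 / p.toReal) * r = (S.ncard * r ^ p.toReal) ^ (1 / p.toReal) := by
      rw [Real.mul_rpow (by positivity) (by positivity), one_div, Real.rpow_rpow_inv hr hp.ne']
    _ ≤ (∑ i, dist (f i) (g i) ^ p.toReal) ^ (1 / p.toReal) := by gcongr
    _ = dist f g := (PiLp.dist_eq_sum hp f g).symm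

theorem rpow_mul_half_le_piLp_dist_of_ncard_range_lt {E : Type*} [PseudoMetricSpace E]
    (hp : 0 < p.toReal) {m : ℕ} {s : ℝ} (hs : 0 ≤ s) {f g : PiLp p fun _ : ι => E}
    (hsep : ∀ i j, f i ≠ f j → s ≤ dist (f i) (f j))
    (hocc : ∀ i, m ≤ {j | f j = f i}.ncard)
    (hlt : (range fun i => g i).ncard < (range fun i => f i).ncard) :
    (m : ℝ) ^ (1 / p.toReal) * (s / 2) ≤ dist f g := by
  obtain ⟨i, hi⟩ := exists_forall_fiber_half_le_dist hsep hlt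
  calc
    (m : ℝ) ^ (1 / p.toReal) * (s / 2)
        ≤ ({j | f j = f i}.ncard : ℝ) ^ (1 / p.toReal) * (s / 2) := by
      gcongr
      exact hocc i
    _ ≤ dist f g := ncard_rpow_mul_le_piLp_dist hp (by positivity) hi

theorem stmt13_general {E : Type*} [PseudoMetricSpace E] [Fact (1 ≤ p)] (hp : p ≠ ∞)
    {K m : ℕ} {s t : ℝ} (hmst : 2 * t < (m : ℝ) ^ (1 / p.toReal) * (s / 2))
    {X D : PiLp p fun _ : ι => E} (hKrows : (range fun i => D i).ncard = K)
    (hsep : ∀ i j, D i ≠ D j → s ≤ dist (D i) (D j))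
    (hocc : ∀ i, m ≤ {j | D j = D i}.ncard) (hDX : dist D X ≤ t) :
    (∃ C : PiLp p fun _ : ι => E, (range fun i => C i).ncard ≤ K ∧ dist C X ≤ t) ∧
      ∀ C : PiLp p fun _ : ι => E, (range fun i => C i).ncard < K → t < dist C X := by
  refine ⟨⟨D, hKrows.le, hDX⟩, fun C hC => ?_⟩
  have hprod : 0 < (m : ℝ) ^ (1 / p.toReal) * (s / 2) := by
    linarith [dist_nonneg (x := D) (y := X)]
  have hs : 0 < s / 2 := pos_of_mul_pos_right hprod (by positivity)
  have hp' : 0 < p.toReal := ENNReal.toReal_pos (zero_lt_one.trans_le Fact.out).ne' hp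
  have hDC : (m : ℝ) ^ (1 / p.toReal) * (s / 2) ≤ dist D C :=
    rpow_mul_half_le_piLp_dist_of_ncard_range_lt hp' (by linarith) hsep hocc (hKrows ▸ hC)
  linarith [dist_triangle_right D C X]

end Clustering

section EuclideanRows

open Set

variable {m n : Type*}

/-- A real matrix as the `ℓ²`-family of its rows, each a point of Euclidean space; the distance
on this type is the Frobenius distance. -/
def euclideanRows : Matrix m n ℝ ≃ PiLp 2 fun _ : m => EuclideanSpace ℝ n :=
  (Equiv.piCongrRight fun _ => (WithLp.equiv 2 (n → ℝ)).symm).trans (WithLp.equiv 2 _).symm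

theorem euclideanRows_apply (A : Matrix m n ℝ) (i : m) :
    euclideanRows A i = WithLp.toLp 2 (A i) := rfl

theorem euclideanRows_apply_inj {A B : Matrix m n ℝ} {i j : m} :
    euclideanRows A i = euclideanRows B j ↔ A i = B j :=
  (WithLp.toLp_injective 2).eq_iff

theorem ncard_range_euclideanRows (A : Matrix m n ℝ) :
    (range fun i => euclideanRows A i).ncard = (range fun i => A i).ncard := by
  rw [← ncard_image_of_injective (range fun i => A i) (WithLp.toLp_injective 2), ← range_comp]
  rfl

theorem dist_euclideanRows_apply {k l : ℕ} (A B : Matrix (Fin k) (Fin l) ℝ) (i j : Fin k) :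
    dist (euclideanRows A i) (euclideanRows B j) = rowDist (A i) (B j) := by
  simp only [EuclideanSpace.dist_eq, euclideanRows_apply, Real.dist_eq, sq_abs, rowDist]

theorem dist_euclideanRows {k l : ℕ} (A B : Matrix (Fin k) (Fin l) ℝ) :
    dist (euclideanRows A) (euclideanRows B) = frobNorm (A - B) := by
  simp only [PiLp.dist_eq_of_L2 (euclideanRows A), EuclideanSpace.dist_sq_eq,
    euclideanRows_apply, Real.dist_eq, sq_abs, frobNorm, Matrix.sub_apply]

end EuclideanRows

/-- the deterministic, conditional form of Theorem 5.1: the least-squares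
clustering error drops below the threshold `t` exactly when the number of allowed clusters
reaches the true number `K`. -/
theorem stmt13 {n R K m : ℕ} (hn : 0 < n) (hR : 0 < R) (hK : 0 < K) (hm : 0 < m)
    (s t : ℝ) (hs : 0 < s) (ht : 0 < t)
    (hmst : 2 * t < Real.sqrt m * (s / 3))
    (X D : Matrix (Fin n) (Fin R) ℝ)
    (hKrows : (Set.range fun i => D i).ncard = K)
    (hsep : ∀ i j, D i ≠ D j → s ≤ rowDist (D i) (D j))
    (hocc : ∀ i, m < {j | D j = D i}.ncard)
    (hDX : frobNorm (D - X) ≤ t) :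
    (∃ C : Matrix (Fin n) (Fin R) ℝ,
        (Set.range fun i => C i).ncard ≤ K ∧ frobNorm (C - X) ≤ t) ∧
      ∀ C : Matrix (Fin n) (Fin R) ℝ,
        (Set.range fun i => C i).ncard < K → t < frobNorm (C - X) := by
  have hmst' : 2 * t < (m : ℝ) ^ (1 / (2 : ℝ≥0∞).toReal) * (s / 2) := by
    rw [ENNReal.toReal_ofNat, ← Real.sqrt_eq_rpow]
    exact hmst.trans_le (by gcongr; norm_num)
  simpa only [euclideanRows.symm.exists_congr_left, euclideanRows.symm.forall_congr_left,
    Equiv.symm_symm, ncard_range_euclideanRows, dist_euclideanRows] using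
    stmt13_general ENNReal.ofNat_ne_top hmst' (X := euclideanRows X) (D := euclideanRows D)
      (by rwa [ncard_range_euclideanRows])
      (by simpa only [dist_euclideanRows_apply, ne_eq, euclideanRows_apply_inj] using hsep)
      (by simpa only [euclideanRows_apply_inj] using fun i => (hocc i).le)
      (by rwa [dist_euclideanRows])
end
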